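/- For every ν>0 and every palette 𝒫 there exist α>0, C>0 and N∈ℕ such that: if H is a 3-graph on n≥N vertices that α-almost satisfies 𝒫 and H is (d,η,▽)-dense for some d∈[0,1] and η>0, then d ≤ Λ^▽_𝒫 + Cη + ν. -/

import Mathlib

/-!
The proof looks for three vertex sets `X < Y < Z` (in the order witnessing that the 3-graph almost
satisfies `P`), each containing a positive proportion of the vertices, such that `X × Y × Z`
contains at most `(Λ + ν/2)|X||Y||Z|` edges up to the few deleted ones. Comparing this with the
density hypothesis gives the bound on `d`.

* Cut the ordered vertex set into `m` consecutive blocks of equal size. An energy argument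
  (`exists_regular_tuple`) shrinks the blocks by a bounded factor so that every colour class is
  cut-regular between any two of them. No partition is needed: among all tuples `U` of nonempty
  subsets of the blocks, take one maximising `∑ dens² + γ ∑ log |U i|`. An irregular pair would
  split `U` into four tuples whose energies average at least `ε²` more than that of `U`, whereas
  the logarithmic terms drop by at most `3γ` on average, so one of the four would be better.
* Round the vectors of colour densities and apply Ramsey's theorem for triangles
  (`exists_mono_triangle`): for `m` large, some three blocks have nearly the same density
  vector `x` on all three pairs. Every pair of vertices has exactly one colour, so `x` is a
  weighting of `P`.
* The triangle counting lemma (`count_le`) bounds the number of triples coloured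
  `(a, b, c)` by `(x_a x_b x_c + small)|X||Y||Z|`. Summing over `P` gives the required bound.
-/

open Finset

/-- A 3-uniform hypergraph: a finite vertex set (of naturals) together with a set of
3-element subsets of it as edges. -/
structure ThreeGraph where
  verts : Finset ℕ
  edges : Finset (Finset ℕ)
  edge_sub : ∀ e ∈ edges, e ⊆ verts
  edge_card : ∀ e ∈ edges, e.card = 3

/-- `F` occurs as a subhypergraph of `H`. -/
def IsSubhypergraph (F H : ThreeGraph) : Prop :=
  ∃ f : ℕ → ℕ, Set.InjOn f ↑F.verts ∧ (∀ v ∈ F.verts, f v ∈ H.verts) ∧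
    ∀ e ∈ F.edges, e.image f ∈ H.edges

noncomputable section

/-- Number of triples `(x,y,z) ∈ X × Y × Z` with `{x,y,z}` an edge of `H`. -/
def eVVV (H : ThreeGraph) (X Y Z : Finset ℕ) : ℕ :=
  ((X ×ˢ Y ×ˢ Z).filter fun p => ({p.1, p.2.1, p.2.2} : Finset ℕ) ∈ H.edges).card

/-- `H` is `(d,η,▽)`-dense. -/
def IsDenseVVV (H : ThreeGraph) (d η : ℝ) : Prop :=
  ∀ X Y Z : Finset ℕ, X ⊆ H.verts → Y ⊆ H.verts → Z ⊆ H.verts →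
    (eVVV H X Y Z : ℝ) ≥ d * X.card * Y.card * Z.card - η * (H.verts.card : ℝ) ^ 3

/-- Number of ordered triples `(x,y,z)` with `x ∈ X`, `{y,z} ∈ P` and `{x,y,z}` an edge. -/
def eEV (H : ThreeGraph) (X : Finset ℕ) (P : Finset (Finset ℕ)) : ℕ :=
  ((X ×ˢ H.verts ×ˢ H.verts).filter fun p =>
    ({p.2.1, p.2.2} : Finset ℕ) ∈ P ∧ ({p.1, p.2.1, p.2.2} : Finset ℕ) ∈ H.edges).card

/-- `H` is `(d,η,e↦v)`-dense. -/
def IsDenseEV (H : ThreeGraph) (d η : ℝ) : Prop :=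
  ∀ (X : Finset ℕ) (P : Finset (Finset ℕ)), X ⊆ H.verts →
    (∀ p ∈ P, p ⊆ H.verts ∧ p.card = 2) →
    (eEV H X P : ℝ) ≥ d * X.card * P.card - η * (H.verts.card : ℝ) ^ 3

/-- `K_{ee}(P,Q)`: ordered triples `(x,y,z)` with `{x,y} ∈ P` and `{y,z} ∈ Q`. -/
def KEE (H : ThreeGraph) (P Q : Finset (Finset ℕ)) : Finset (ℕ × ℕ × ℕ) :=
  (H.verts ×ˢ H.verts ×ˢ H.verts).filter fun p =>
    ({p.1, p.2.1} : Finset ℕ) ∈ P ∧ ({p.2.1, p.2.2} : Finset ℕ) ∈ Q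

/-- Number of triples in `K_{ee}(P,Q)` forming an edge of `H`. -/
def eEE (H : ThreeGraph) (P Q : Finset (Finset ℕ)) : ℕ :=
  ((KEE H P Q).filter fun p => ({p.1, p.2.1, p.2.2} : Finset ℕ) ∈ H.edges).card

/-- `H` is `(d,η,ee)`-dense. -/
def IsDenseEE (H : ThreeGraph) (d η : ℝ) : Prop :=
  ∀ P Q : Finset (Finset ℕ),
    (∀ p ∈ P, p ⊆ H.verts ∧ p.card = 2) → (∀ q ∈ Q, q ⊆ H.verts ∧ q.card = 2) →
    (eEE H P Q : ℝ) ≥ d * (KEE H P Q).card - η * (H.verts.card : ℝ) ^ 3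

/-- The uniform Turán density `π_▽(𝓕)` of a family `𝓕` of 3-graphs. -/
def piVVV (𝓕 : Set ThreeGraph) : ℝ :=
  sSup {d : ℝ | 0 ≤ d ∧ d ≤ 1 ∧ ∀ η : ℝ, 0 < η → ∀ n : ℕ,
    ∃ H : ThreeGraph, n ≤ H.verts.card ∧ (∀ F ∈ 𝓕, ¬ IsSubhypergraph F H) ∧
      IsDenseVVV H d η}

/-- The uniform Turán density `π_{e↦v}(𝓕)` of a family `𝓕` of 3-graphs. -/
def piEV (𝓕 : Set ThreeGraph) : ℝ :=
  sSup {d : ℝ | 0 ≤ d ∧ d ≤ 1 ∧ ∀ η : ℝ, 0 < η → ∀ n : ℕ,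
    ∃ H : ThreeGraph, n ≤ H.verts.card ∧ (∀ F ∈ 𝓕, ¬ IsSubhypergraph F H) ∧
      IsDenseEV H d η}

/-- The uniform Turán density `π_{ee}(𝓕)` of a family `𝓕` of 3-graphs. -/
def piEE (𝓕 : Set ThreeGraph) : ℝ :=
  sSup {d : ℝ | 0 ≤ d ∧ d ≤ 1 ∧ ∀ η : ℝ, 0 < η → ∀ n : ℕ,
    ∃ H : ThreeGraph, n ≤ H.verts.card ∧ (∀ F ∈ 𝓕, ¬ IsSubhypergraph F H) ∧
      IsDenseEE H d η}

/-- A palette: a finite set of ordered triples of natural numbers (colours). -/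
abbrev Palette := Finset (ℕ × ℕ × ℕ)

/-- The set of colours `Φ(𝒫)` of a palette. -/
def palColours (P : Palette) : Finset ℕ :=
  P.image (·.1) ∪ P.image (·.2.1) ∪ P.image (·.2.2)

/-- A weighting of a palette: nonnegative weights on the colours summing to 1. -/
def IsWeighting (P : Palette) (x : ℕ → ℝ) : Prop :=
  (∀ a ∈ palColours P, 0 ≤ x a) ∧ ∑ a ∈ palColours P, x a = 1

/-- `λ^▽_𝒫(x) = Σ_{(a,b,c) ∈ 𝒫} x_a x_b x_c`. -/
def lamVVV (P : Palette) (x : ℕ → ℝ) : ℝ :=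
  ∑ p ∈ P, x p.1 * x p.2.1 * x p.2.2

/-- The palette Lagrangian `Λ^▽_𝒫`. -/
def LambdaVVV (P : Palette) : ℝ :=
  sSup {l : ℝ | ∃ x : ℕ → ℝ, IsWeighting P x ∧ l = lamVVV P x}

/-- The ordered degree Lagrangian `λ^a_𝒫(x)`. -/
def lamDeg (P : Palette) (a : ℕ) (x : ℕ → ℝ) : ℝ :=
  min (min (∑ p ∈ P.filter (fun p => p.1 = a), x p.2.1 * x p.2.2)
           (∑ p ∈ P.filter (fun p => p.2.1 = a), x p.1 * x p.2.2))
      (∑ p ∈ P.filter (fun p => p.2.2 = a), x p.1 * x p.2.1)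

/-- `λ^{e↦v}_𝒫(x)`: minimum of `λ^a_𝒫(x)` over colours `a` with positive weight. -/
def lamEV (P : Palette) (x : ℕ → ℝ) : ℝ :=
  sInf {l : ℝ | ∃ a ∈ palColours P, 0 < x a ∧ l = lamDeg P a x}

/-- The palette Lagrangian `Λ^{e↦v}_𝒫`. -/
def LambdaEV (P : Palette) : ℝ :=
  sSup {l : ℝ | ∃ x : ℕ → ℝ, IsWeighting P x ∧ l = lamEV P x}

/-- The ordered codegree Lagrangian `λ^{a,b}_𝒫(x)`. -/
def lamCodeg (P : Palette) (a b : ℕ) (x : ℕ → ℝ) : ℝ :=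
  min (min (min (∑ p ∈ P.filter (fun p => p.1 = a ∧ p.2.1 = b), x p.2.2)
                (∑ p ∈ P.filter (fun p => p.1 = b ∧ p.2.1 = a), x p.2.2))
           (min (∑ p ∈ P.filter (fun p => p.1 = a ∧ p.2.2 = b), x p.2.1)
                (∑ p ∈ P.filter (fun p => p.1 = b ∧ p.2.2 = a), x p.2.1)))
      (min (∑ p ∈ P.filter (fun p => p.2.1 = a ∧ p.2.2 = b), x p.1)
           (∑ p ∈ P.filter (fun p => p.2.1 = b ∧ p.2.2 = a), x p.1))

/-- `λ^{ee}_𝒫(x)`: minimum of `λ^{a,b}_𝒫(x)` over colours `a,b` with positive weight. -/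
def lamEE (P : Palette) (x : ℕ → ℝ) : ℝ :=
  sInf {l : ℝ | ∃ a ∈ palColours P, ∃ b ∈ palColours P, 0 < x a * x b ∧ l = lamCodeg P a b x}

/-- The palette Lagrangian `Λ^{ee}_𝒫`. -/
def LambdaEE (P : Palette) : ℝ :=
  sSup {l : ℝ | ∃ x : ℕ → ℝ, IsWeighting P x ∧ l = lamEE P x}

/-- A 3-graph `H` satisfies a palette `P`: there is an ordering of the vertices (an
injection `ord` into `ℕ`) and a colouring `φ` of the pairs of vertices with colours in
`Φ(P)` such that the ordered shadow of every edge is a triple of the palette. -/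
def Satisfies (H : ThreeGraph) (P : Palette) : Prop :=
  ∃ (ord : ℕ → ℕ) (φ : Finset ℕ → ℕ),
    Set.InjOn ord ↑H.verts ∧
    (∀ u ∈ H.verts, ∀ v ∈ H.verts, u ≠ v → φ {u, v} ∈ palColours P) ∧
    ∀ u v w : ℕ, ({u, v, w} : Finset ℕ) ∈ H.edges →
      ord u < ord v → ord v < ord w →
      (φ {u, v}, φ {v, w}, φ {u, w}) ∈ P

/-- Delete a set of edges from a 3-graph. -/
def ThreeGraph.deleteEdges (H : ThreeGraph) (R : Finset (Finset ℕ)) : ThreeGraph where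
  verts := H.verts
  edges := H.edges \ R
  edge_sub := fun e he => H.edge_sub e (Finset.mem_sdiff.mp he).1
  edge_card := fun e he => H.edge_card e (Finset.mem_sdiff.mp he).1

/-- `H` α-almost satisfies `P`: one can remove at most `α·|V(H)|³` edges so that the
resulting 3-graph satisfies `P`. -/
def AlmostSatisfies (H : ThreeGraph) (P : Palette) (α : ℝ) : Prop :=
  ∃ R ⊆ H.edges, (R.card : ℝ) ≤ α * (H.verts.card : ℝ) ^ 3 ∧
    Satisfies (H.deleteEdges R) P

/-- The Lagrange polynomial `λ_F(x) = 3! Σ_{e ∈ E(F)} Π_{v ∈ e} x_v` of a 3-graph. -/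
def lagrangePoly (F : ThreeGraph) (x : ℕ → ℝ) : ℝ :=
  6 * ∑ e ∈ F.edges, ∏ v ∈ e, x v

/-- The Lagrangian `Λ_F` of a 3-graph: the supremum of the Lagrange polynomial over the
standard simplex on the vertices. -/
def lagrangian (F : ThreeGraph) : ℝ :=
  sSup {l : ℝ | ∃ x : ℕ → ℝ, (∀ v ∈ F.verts, 0 ≤ x v ∧ x v ≤ 1) ∧
    (∑ v ∈ F.verts, x v = 1) ∧ l = lagrangePoly F x}

end

/-! ### Ramsey's theorem for triangles -/

/-- For any bound `R` on the number of colours, a large enough ordered set has a monochromatic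
triangle in every colouring of its pairs. -/
lemma exists_mono_triangle (R : ℕ) : ∃ m : ℕ, ∀ {κ : Type} [DecidableEq κ] (K : Finset κ),
    K.card ≤ R → ∀ (M : ℕ) (S : Finset (Fin M)), m ≤ S.card → ∀ c : Fin M → Fin M → κ,
    (∀ i ∈ S, ∀ j ∈ S, i < j → c i j ∈ K) →
    ∃ i j k, i < j ∧ j < k ∧ c i j = c i k ∧ c i j = c j k := by
  induction R with
  | zero =>
    refine ⟨2, fun K hK M S hS c hc => ?_⟩
    obtain ⟨i, hi, j, hj, hij⟩ := Finset.one_lt_card.mp hS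
    have hK' : K = ∅ := by simpa using hK
    subst hK'
    rcases lt_or_gt_of_ne hij with h | h
    · simpa using hc i hi j hj h
    · simpa using hc j hj i hi h
  | succ R ih =>
    obtain ⟨m, hm⟩ := ih
    refine ⟨(R + 1) * m + 2, fun {κ} _ K hK M S hS c hc => ?_⟩
    have hne : S.Nonempty := Finset.card_pos.mp (by omega)
    set i := S.min' hne with hi
    have hiS : i ∈ S := S.min'_mem hne
    have hlt : ∀ j ∈ S.erase i, i < j := fun j hj => S.min'_lt_of_mem_erase_min' hne hj
    have hcard : (S.erase i).card = S.card - 1 := Finset.card_erase_of_mem hiS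
    -- pigeonhole on the colours of the pairs containing the least element
    obtain ⟨κ₀, hκ₀, hbig⟩ := Finset.exists_lt_card_fiber_of_mul_lt_card_of_maps_to
      (s := S.erase i) (t := K) (f := fun j => c i j) (n := m)
      (fun j hj => hc i hiS j (Finset.mem_of_mem_erase hj) (hlt j hj)) (by
        have : K.card * m ≤ (R + 1) * m := Nat.mul_le_mul_right _ hK
        omega)
    by_cases hex : ∃ j ∈ (S.erase i).filter (fun j => c i j = κ₀),
        ∃ k ∈ (S.erase i).filter (fun j => c i j = κ₀), j < k ∧ c j k = κ₀
    · obtain ⟨j, hj, k, hk, hjk, hc'⟩ := hex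
      rw [Finset.mem_filter] at hj hk
      exact ⟨i, j, k, hlt j hj.1, hjk, hj.2.trans hk.2.symm, hj.2.trans hc'.symm⟩
    · push Not at hex
      refine hm (K.erase κ₀) ?_ M _ hbig.le c ?_
      · rw [Finset.card_erase_of_mem hκ₀]; omega
      · intro j hj k hk hjk
        refine Finset.mem_erase.mpr ⟨hex j hj k hk hjk, ?_⟩
        exact hc j (Finset.mem_of_mem_erase (Finset.mem_filter.mp hj).1) k
          (Finset.mem_of_mem_erase (Finset.mem_filter.mp hk).1) hjk

/-! ### Regular tuples of vertex sets -/

/-- The total weight of `f` on `A × B`. -/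
noncomputable def wsum (f : ℕ → ℕ → ℝ) (A B : Finset ℕ) : ℝ := ∑ x ∈ A, ∑ y ∈ B, f x y

/-- The density of `f` on `A × B`; it is `0` when `A` or `B` is empty. -/
noncomputable def pdens (f : ℕ → ℕ → ℝ) (A B : Finset ℕ) : ℝ := wsum f A B / (A.card * B.card)

lemma wsum_eq_pdens (f : ℕ → ℕ → ℝ) (A B : Finset ℕ) :
    wsum f A B = pdens f A B * (A.card * B.card) := by
  unfold pdens
  rcases A.eq_empty_or_nonempty with rfl | hA
  · simp [wsum]
  rcases B.eq_empty_or_nonempty with rfl | hB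
  · simp [wsum]
  have h1 : (A.card : ℝ) ≠ 0 := by exact_mod_cast hA.card_pos.ne'
  have h2 : (B.card : ℝ) ≠ 0 := by exact_mod_cast hB.card_pos.ne'
  field_simp

lemma pdens_nonneg {f : ℕ → ℕ → ℝ} (h0 : ∀ x y, 0 ≤ f x y) (A B : Finset ℕ) :
    0 ≤ pdens f A B :=
  div_nonneg (Finset.sum_nonneg fun _ _ => Finset.sum_nonneg fun _ _ => h0 _ _) (by positivity)

lemma pdens_le_one {f : ℕ → ℕ → ℝ} (h1 : ∀ x y, f x y ≤ 1) (A B : Finset ℕ) :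
    pdens f A B ≤ 1 := by
  unfold pdens
  refine div_le_one_of_le₀ ?_ (by positivity)
  calc wsum f A B ≤ ∑ x ∈ A, ∑ y ∈ B, (1 : ℝ) :=
        Finset.sum_le_sum fun _ _ => Finset.sum_le_sum fun _ _ => h1 _ _
    _ = _ := by simp

/-- The two halves of the splitting of `U` along `A`: the set `A` itself and its complement. -/
def half (U A : Finset ℕ) (s : Bool) : Finset ℕ := if s then A else U \ A

lemma half_subset {U A : Finset ℕ} (h : A ⊆ U) (s : Bool) : half U A s ⊆ U := by
  cases s <;> simp [half, h]

/-- The proportion of `U` in each half of its splitting along `A`. -/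
noncomputable def prop (U A : Finset ℕ) (s : Bool) : ℝ := (half U A s).card / U.card

lemma prop_nonneg (U A : Finset ℕ) (s : Bool) : 0 ≤ prop U A s := by
  unfold prop; positivity

lemma prop_sum {U A : Finset ℕ} (h : A ⊆ U) (hU : U.Nonempty) : ∑ s, prop U A s = 1 := by
  have h1 : (U.card : ℝ) ≠ 0 := by exact_mod_cast hU.card_pos.ne'
  have h2 : ((U \ A).card : ℝ) + A.card = U.card := by
    exact_mod_cast Finset.card_sdiff_add_card_eq_card h
  simp only [prop, half, Fintype.sum_bool, if_true, Bool.false_eq_true, if_false]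
  field_simp
  linarith

lemma pdens_split_left (f : ℕ → ℕ → ℝ) {U A B : Finset ℕ} (h : A ⊆ U) (hU : U.Nonempty) :
    ∑ s, prop U A s * pdens f (half U A s) B = pdens f U B := by
  have h1 : (U.card : ℝ) ≠ 0 := by exact_mod_cast hU.card_pos.ne'
  rcases B.eq_empty_or_nonempty with rfl | hB
  · simp [pdens, wsum]
  have h2 : (B.card : ℝ) ≠ 0 := by exact_mod_cast hB.card_pos.ne'
  have key : ∀ s, prop U A s * pdens f (half U A s) B
      = wsum f (half U A s) B / (U.card * B.card) := by
    intro s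
    rw [wsum_eq_pdens f (half U A s) B, prop]
    field_simp
  rw [Finset.sum_congr rfl fun s _ => key s]
  simp only [Fintype.sum_bool, half, if_true, Bool.false_eq_true, if_false]
  rw [← add_div, pdens]
  congr 1
  unfold wsum
  rw [add_comm]
  exact Finset.sum_sdiff h

lemma wsum_swap (f : ℕ → ℕ → ℝ) (A B : Finset ℕ) :
    wsum f A B = wsum (fun x y => f y x) B A := Finset.sum_comm

lemma pdens_swap (f : ℕ → ℕ → ℝ) (A B : Finset ℕ) :
    pdens f A B = pdens (fun x y => f y x) B A := by
  rw [pdens, pdens, wsum_swap, mul_comm]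

lemma pdens_split_right (f : ℕ → ℕ → ℝ) {U A B : Finset ℕ} (h : A ⊆ U) (hU : U.Nonempty) :
    ∑ s, prop U A s * pdens f B (half U A s) = pdens f B U := by
  simp only [pdens_swap f B]
  exact pdens_split_left _ h hU

/-- Splitting one member of a tuple preserves the density of every pair on average. -/
lemma pdens_split {m : ℕ} (f : ℕ → ℕ → ℝ) (U : Fin m → Finset ℕ) {i p q : Fin m} (hpq : p ≠ q)
    {A : Finset ℕ} (h : A ⊆ U i) (hU : (U i).Nonempty) :
    ∑ s, prop (U i) A s * pdens f (Function.update U i (half (U i) A s) p)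
      (Function.update U i (half (U i) A s) q) = pdens f (U p) (U q) := by
  by_cases hp : p = i
  · subst hp
    simpa [Function.update_of_ne hpq.symm] using pdens_split_left f h hU
  by_cases hq : q = i
  · subst hq
    simpa [Function.update_of_ne hpq] using pdens_split_right f h hU
  · simp only [Function.update_of_ne hp, Function.update_of_ne hq]
    rw [← Finset.sum_mul, prop_sum h hU, one_mul]

/-- The subtuple of `U` obtained by replacing `U i` and `U j` by halves of their splittings along
`A` and `B`. -/
def sub4 {m : ℕ} (U : Fin m → Finset ℕ) (i j : Fin m) (A B : Finset ℕ) (st : Bool × Bool) :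
    Fin m → Finset ℕ :=
  Function.update (Function.update U i (half (U i) A st.1)) j (half (U j) B st.2)

/-- The proportion of the product of the sets `U l` taken up by the subtuple `sub4` (for `i ≠ j`). -/
noncomputable def wt {m : ℕ} (U : Fin m → Finset ℕ) (i j : Fin m) (A B : Finset ℕ)
    (st : Bool × Bool) : ℝ := prop (U i) A st.1 * prop (U j) B st.2

section Splitting

variable {m : ℕ} {U : Fin m → Finset ℕ} {i j : Fin m} {A B : Finset ℕ}

lemma wt_sum (hA : A ⊆ U i) (hB : B ⊆ U j) (hi : (U i).Nonempty) (hj : (U j).Nonempty) :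
    ∑ st, wt U i j A B st = 1 := by
  rw [Fintype.sum_prod_type]
  simp only [wt, ← Finset.mul_sum, prop_sum hB hj, mul_one, prop_sum hA hi]

lemma pdens_split4 (f : ℕ → ℕ → ℝ) (hij : i ≠ j) (hA : A ⊆ U i) (hB : B ⊆ U j)
    (hi : (U i).Nonempty) (hj : (U j).Nonempty) {p q : Fin m} (hpq : p ≠ q) :
    ∑ st, wt U i j A B st * pdens f (sub4 U i j A B st p) (sub4 U i j A B st q)
      = pdens f (U p) (U q) := by
  rw [Fintype.sum_prod_type, ← pdens_split f U hpq hA hi]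
  refine Finset.sum_congr rfl fun s _ => ?_
  simp only [wt, mul_assoc, ← Finset.mul_sum]
  congr 1
  have hUj : Function.update U i (half (U i) A s) j = U j := Function.update_of_ne hij.symm _ _
  have := pdens_split f (Function.update U i (half (U i) A s)) (i := j) hpq
    (A := B) (by rwa [hUj]) (by rwa [hUj])
  rw [hUj] at this
  exact this

/-- Passing to the four subtuples raises the mean of a squared density by its variance. -/
lemma sq_split4 (f : ℕ → ℕ → ℝ) (hij : i ≠ j) (hA : A ⊆ U i) (hB : B ⊆ U j)
    (hi : (U i).Nonempty) (hj : (U j).Nonempty) {p q : Fin m} (hpq : p ≠ q) :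
    ∑ st, wt U i j A B st * pdens f (sub4 U i j A B st p) (sub4 U i j A B st q) ^ 2
      = pdens f (U p) (U q) ^ 2 + ∑ st, wt U i j A B st *
        (pdens f (sub4 U i j A B st p) (sub4 U i j A B st q) - pdens f (U p) (U q)) ^ 2 := by
  have h1 := pdens_split4 f hij hA hB hi hj hpq
  have h2 := wt_sum hA hB hi hj
  set d := pdens f (U p) (U q)
  have h3 : ∀ st, wt U i j A B st *
      (pdens f (sub4 U i j A B st p) (sub4 U i j A B st q) - d) ^ 2
      = wt U i j A B st * pdens f (sub4 U i j A B st p) (sub4 U i j A B st q) ^ 2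
        - 2 * d * (wt U i j A B st * pdens f (sub4 U i j A B st p) (sub4 U i j A B st q))
        + d ^ 2 * wt U i j A B st := fun st => by ring
  simp only [h3, Finset.sum_add_distrib, Finset.sum_sub_distrib, ← Finset.mul_sum]
  rw [h1, h2]
  ring

lemma wt_nonneg (st : Bool × Bool) : 0 ≤ wt U i j A B st :=
  mul_nonneg (prop_nonneg _ _ _) (prop_nonneg _ _ _)

end Splitting

/-- The energy of a tuple: the sum over pairs of indices `p < q` and colours `a` of the squared
density of `f a` between the corresponding members. -/
noncomputable def energy {m : ℕ} (Φ : Finset ℕ) (f : ℕ → ℕ → ℕ → ℝ) (U : Fin m → Finset ℕ) : ℝ :=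
  ∑ t ∈ (Finset.univ.filter fun p : Fin m × Fin m => p.1 < p.2) ×ˢ Φ,
    pdens (f t.2) (U t.1.1) (U t.1.2) ^ 2

/-- An irregular pair gives an average energy increment of `ε²` over the four subtuples. -/
lemma energy_gain {m : ℕ} {Φ : Finset ℕ} {f : ℕ → ℕ → ℕ → ℝ} {U : Fin m → Finset ℕ}
    {i j : Fin m} {A B : Finset ℕ} {a : ℕ} {ε : ℝ} (hε : 0 < ε) (hij : i < j) (ha : a ∈ Φ)
    (hA : A ⊆ U i) (hB : B ⊆ U j) (hi : (U i).Nonempty) (hj : (U j).Nonempty)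
    (hirr : ε * ((U i).card * (U j).card) <
      |wsum (f a) A B - pdens (f a) (U i) (U j) * (A.card * B.card)|) :
    energy Φ f U + ε ^ 2 ≤ ∑ st, wt U i j A B st * energy Φ f (sub4 U i j A B st) := by
  have key : ε ^ 2 ≤ wt U i j A B (true, true) *
      (pdens (f a) (sub4 U i j A B (true, true) i) (sub4 U i j A B (true, true) j)
        - pdens (f a) (U i) (U j)) ^ 2 := by
    have e1 : sub4 U i j A B (true, true) i = A := by
      simp [sub4, half, Function.update_of_ne hij.ne]
    have e2 : sub4 U i j A B (true, true) j = B := by simp [sub4, half]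
    rw [e1, e2]
    have hp1 : (0 : ℝ) < (U i).card := by exact_mod_cast hi.card_pos
    have hp2 : (0 : ℝ) < (U j).card := by exact_mod_cast hj.card_pos
    set w := wt U i j A B (true, true) with hw
    set δ := pdens (f a) A B - pdens (f a) (U i) (U j)
    have hw0 : 0 ≤ w := wt_nonneg _
    have hw1 : w ≤ 1 := by
      rw [← wt_sum hA hB hi hj]
      exact Finset.single_le_sum (f := fun st => wt U i j A B st)
        (fun st _ => wt_nonneg st) (Finset.mem_univ (true, true))
    have hwe : (A.card : ℝ) * B.card = w * ((U i).card * (U j).card) := by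
      simp only [hw, wt, prop, half, if_true]
      field_simp
    rw [wsum_eq_pdens, ← sub_mul, hwe, ← mul_assoc (_ - _) w, abs_mul,
      abs_of_pos (mul_pos hp1 hp2)] at hirr
    have h3 : ε < |δ * w| := lt_of_mul_lt_mul_right hirr (mul_pos hp1 hp2).le
    have h4 : ε ^ 2 ≤ (δ * w) ^ 2 := by
      rw [← sq_abs (δ * w)]
      gcongr
    nlinarith [mul_nonneg (mul_nonneg hw0 (sub_nonneg.mpr hw1)) (sq_nonneg δ)]
  set T := (Finset.univ.filter fun p : Fin m × Fin m => p.1 < p.2) ×ˢ Φ with hT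
  have hsum : ∑ st, wt U i j A B st * energy Φ f (sub4 U i j A B st)
      = energy Φ f U + ∑ t ∈ T, ∑ st, wt U i j A B st *
        (pdens (f t.2) (sub4 U i j A B st t.1.1) (sub4 U i j A B st t.1.2)
          - pdens (f t.2) (U t.1.1) (U t.1.2)) ^ 2 := by
    simp only [energy, Finset.mul_sum]
    rw [Finset.sum_comm, ← Finset.sum_add_distrib]
    refine Finset.sum_congr rfl fun t ht => ?_
    have : t.1.1 < t.1.2 := by simpa using (Finset.mem_product.mp ht).1
    exact sq_split4 (f t.2) hij.ne hA hB hi hj this.ne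
  rw [hsum]
  gcongr
  have hmem : ((i, j), a) ∈ T := by simp [hT, hij, ha]
  have hsingle : ∀ G : (Fin m × Fin m) × ℕ → Bool × Bool → ℝ, (∀ t st, 0 ≤ G t st) →
      G ((i, j), a) (true, true) ≤ ∑ t ∈ T, ∑ st, G t st := fun G hG =>
    (Finset.single_le_sum (fun st _ => hG _ st) (Finset.mem_univ (true, true))).trans
      (Finset.single_le_sum (f := fun t => ∑ st, G t st)
        (fun t _ => Finset.sum_nonneg fun st _ => hG t st) hmem)
  exact key.trans (hsingle (fun t st => wt U i j A B st *
    (pdens (f t.2) (sub4 U i j A B st t.1.1) (sub4 U i j A B st t.1.2)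
      - pdens (f t.2) (U t.1.1) (U t.1.2)) ^ 2)
    fun t st => mul_nonneg (wt_nonneg st) (sq_nonneg _))

lemma sum_log_update {m : ℕ} (U : Fin m → Finset ℕ) (i : Fin m) (X : Finset ℕ) :
    ∑ l, Real.log (Function.update U i X l).card
      = ∑ l, Real.log (U l).card + (Real.log X.card - Real.log (U i).card) := by
  rw [← Finset.add_sum_erase _ _ (Finset.mem_univ i),
    ← Finset.add_sum_erase _ (fun l => Real.log (U l).card) (Finset.mem_univ i)]
  have : ∑ l ∈ Finset.univ.erase i, Real.log (Function.update U i X l).card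
      = ∑ l ∈ Finset.univ.erase i, Real.log (U l).card :=
    Finset.sum_congr rfl fun l hl => by
      rw [Function.update_of_ne (Finset.ne_of_mem_erase hl)]
  rw [this, Function.update_self]
  ring

lemma sum_log_sub4 {m : ℕ} {U : Fin m → Finset ℕ} {i j : Fin m} {A B : Finset ℕ}
    {st : Bool × Bool} (hij : i ≠ j) (hw : 0 < wt U i j A B st) :
    ∑ l, Real.log (sub4 U i j A B st l).card
      = ∑ l, Real.log (U l).card + Real.log (wt U i j A B st) := by
  have hp : prop (U i) A st.1 ≠ 0 := left_ne_zero_of_mul hw.ne'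
  have hq : prop (U j) B st.2 ≠ 0 := right_ne_zero_of_mul hw.ne'
  rw [sub4, sum_log_update, sum_log_update, Function.update_of_ne hij.symm, wt,
    Real.log_mul hp hq]
  unfold prop at hp hq ⊢
  rw [div_ne_zero_iff] at hp hq
  rw [Real.log_div hp.1 hp.2, Real.log_div hq.1 hq.2]
  ring

/-- Any `m` nonempty sets can be shrunk by a bounded factor so that each of the weights `f a`
becomes cut-regular between any two of them. -/
lemma exists_regular_tuple (m : ℕ) (Φ : Finset ℕ) (ε : ℝ) (hε : 0 < ε) : ∃ c : ℝ, 0 < c ∧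
    ∀ f : ℕ → ℕ → ℕ → ℝ, (∀ a x y, 0 ≤ f a x y) → (∀ a x y, f a x y ≤ 1) →
    ∀ V : Fin m → Finset ℕ, (∀ i, (V i).Nonempty) →
    ∃ U : Fin m → Finset ℕ, (∀ i, U i ⊆ V i) ∧ (∀ i, (U i).Nonempty) ∧
      (∀ i, c * (V i).card ≤ (U i).card) ∧
      ∀ i j, i < j → ∀ a ∈ Φ, ∀ A B : Finset ℕ, A ⊆ U i → B ⊆ U j →
        |wsum (f a) A B - pdens (f a) (U i) (U j) * (A.card * B.card)|
          ≤ ε * ((U i).card * (U j).card) := by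
  set T := (Finset.univ.filter fun p : Fin m × Fin m => p.1 < p.2) ×ˢ Φ with hT
  set γ : ℝ := ε ^ 2 / 4 with hγ
  have hγ0 : 0 < γ := by positivity
  refine ⟨Real.exp (-(T.card / γ)), Real.exp_pos _, fun f h0 h1 V hV => ?_⟩
  have hE0 : ∀ U : Fin m → Finset ℕ, 0 ≤ energy Φ f U :=
    fun U => Finset.sum_nonneg fun _ _ => sq_nonneg _
  have hE1 : ∀ U : Fin m → Finset ℕ, energy Φ f U ≤ T.card := fun U => by
    calc energy Φ f U ≤ ∑ t ∈ T, (1 : ℝ) := Finset.sum_le_sum fun t _ =>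
          pow_le_one₀ (pdens_nonneg (h0 _) _ _) (pdens_le_one (h1 _) _ _)
      _ = _ := by simp
  obtain ⟨U, hU, hmax⟩ := Finset.exists_max_image
    (Fintype.piFinset fun i => (V i).powerset.filter Finset.Nonempty)
    (fun U => energy Φ f U + γ * ∑ l, Real.log (U l).card)
    ⟨V, by simp [Fintype.mem_piFinset, hV]⟩
  simp only [Fintype.mem_piFinset, Finset.mem_filter, Finset.mem_powerset] at hU hmax
  refine ⟨U, fun i => (hU i).1, fun i => (hU i).2, fun i => ?_, ?_⟩
  · have hpos : ∀ l, (0 : ℝ) < (U l).card := fun l => by exact_mod_cast (hU l).2.card_pos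
    have hposV : ∀ l, (0 : ℝ) < (V l).card := fun l => by exact_mod_cast (hV l).card_pos
    have h := hmax V fun i => ⟨subset_rfl, hV i⟩
    have hnn : ∀ l, 0 ≤ Real.log (V l).card - Real.log (U l).card := fun l =>
      sub_nonneg.mpr (Real.log_le_log (hpos l) (by exact_mod_cast Finset.card_le_card (hU l).1))
    have h2 : Real.log (V i).card - Real.log (U i).card ≤ T.card / γ := by
      refine (Finset.single_le_sum (f := fun l => Real.log (V l).card - Real.log (U l).card)
        (fun l _ => hnn l) (Finset.mem_univ i)).trans ?_
      rw [Finset.sum_sub_distrib, le_div_iff₀ hγ0]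
      nlinarith [hE0 V, hE1 U]
    rw [← Real.log_le_log_iff (mul_pos (Real.exp_pos _) (hposV i)) (hpos i),
      Real.log_mul (Real.exp_pos _).ne' (hposV i).ne', Real.log_exp]
    linarith
  · intro i j hij a ha A B hA hB
    by_contra! hirr
    have hgain := energy_gain hε hij ha hA hB (hU i).2 (hU j).2 hirr
    -- maximality bounds each subtuple; `w log w ≥ w - 1` bounds the loss in the logarithm
    have hst : ∀ st, wt U i j A B st * energy Φ f (sub4 U i j A B st)
        ≤ wt U i j A B st * energy Φ f U + γ * (1 - wt U i j A B st) := by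
      intro st
      rcases (wt_nonneg (U := U) (i := i) (j := j) (A := A) (B := B) st).eq_or_lt with h | h
      · rw [← h]; simp [hγ0.le]
      have hp : prop (U i) A st.1 ≠ 0 := left_ne_zero_of_mul h.ne'
      have hq : prop (U j) B st.2 ≠ 0 := right_ne_zero_of_mul h.ne'
      unfold prop at hp hq
      have hp' : (half (U i) A st.1).Nonempty := by
        rw [Finset.nonempty_iff_ne_empty]; rintro h; simp [h] at hp
      have hq' : (half (U j) B st.2).Nonempty := by
        rw [Finset.nonempty_iff_ne_empty]; rintro h; simp [h] at hq
      have hm := hmax (sub4 U i j A B st) (fun l => by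
        unfold sub4
        by_cases hl : l = j
        · subst hl
          simpa using ⟨(half_subset hB _).trans (hU l).1, hq'⟩
        rw [Function.update_of_ne hl]
        by_cases hl : l = i
        · subst hl
          simpa using ⟨(half_subset hA _).trans (hU l).1, hp'⟩
        rw [Function.update_of_ne hl]
        exact hU l)
      rw [sum_log_sub4 hij.ne h] at hm
      have hlog := Real.one_sub_inv_le_log_of_pos h
      have hlog' : wt U i j A B st - 1 ≤ wt U i j A B st * Real.log (wt U i j A B st) := by
        calc wt U i j A B st - 1 = wt U i j A B st * (1 - (wt U i j A B st)⁻¹) := by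
              field_simp
          _ ≤ _ := by gcongr
      have hm' : energy Φ f (sub4 U i j A B st) + γ * Real.log (wt U i j A B st)
          ≤ energy Φ f U := by linarith
      have := mul_le_mul_of_nonneg_left hm' h.le
      nlinarith
    have hsum := Finset.sum_le_sum fun st (_ : st ∈ Finset.univ) => hst st
    rw [Finset.sum_add_distrib, ← Finset.sum_mul, ← Finset.mul_sum, Finset.sum_sub_distrib,
      wt_sum hA hB (hU i).2 (hU j).2] at hsum
    simp only [Finset.sum_const, Finset.card_univ, Fintype.card_prod, Fintype.card_bool,
      nsmul_eq_mul] at hsum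
    push_cast at hsum
    have : 0 < ε ^ 2 := by positivity
    linarith

/-! ### Counting triangles -/

/-- The indicator of the relation that the pair `{x, y}` has colour `a`. -/
def ind (φ : Finset ℕ → ℕ) (a x y : ℕ) : ℝ := if φ {x, y} = a then 1 else 0

lemma ind_nonneg (φ : Finset ℕ → ℕ) (a x y : ℕ) : 0 ≤ ind φ a x y := by
  unfold ind; split_ifs <;> norm_num

lemma ind_le_one (φ : Finset ℕ → ℕ) (a x y : ℕ) : ind φ a x y ≤ 1 := by
  unfold ind; split_ifs <;> norm_num

/-- Counting lemma: for cut-regular colour classes the number of triangles is at most what the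
densities predict, up to `2ε`. -/
lemma count_le {φ : Finset ℕ → ℕ} {a b c : ℕ} {X Y Z : Finset ℕ} {ε : ℝ}
    (h1 : ∀ A B : Finset ℕ, A ⊆ X → B ⊆ Y →
      |wsum (ind φ a) A B - pdens (ind φ a) X Y * (A.card * B.card)| ≤ ε * (X.card * Y.card))
    (h2 : ∀ A B : Finset ℕ, A ⊆ Y → B ⊆ Z →
      |wsum (ind φ b) A B - pdens (ind φ b) Y Z * (A.card * B.card)| ≤ ε * (Y.card * Z.card))
    (hε : 0 ≤ ε) :
    ∑ x ∈ X, ∑ y ∈ Y, ∑ z ∈ Z, ind φ a x y * ind φ b y z * ind φ c x z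
      ≤ (pdens (ind φ a) X Y * pdens (ind φ b) Y Z * pdens (ind φ c) X Z + 2 * ε)
        * (X.card * Y.card * Z.card) := by
  set dA := pdens (ind φ a) X Y
  set dB := pdens (ind φ b) Y Z
  set dC := pdens (ind φ c) X Z with hdC
  have hA0 : 0 ≤ dA := pdens_nonneg (ind_nonneg φ a) _ _
  have hA1 : dA ≤ 1 := pdens_le_one (ind_le_one φ a) _ _
  -- for fixed `z`, use regularity of colour `a` on the neighbourhoods of `z`
  have s1 : ∀ z, ∑ x ∈ X, ∑ y ∈ Y, ind φ a x y * ind φ b y z * ind φ c x z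
      ≤ dA * ∑ x ∈ X, ∑ y ∈ Y, ind φ b y z * ind φ c x z + ε * (X.card * Y.card) := by
    intro z
    have := (abs_le.mp (h1 (X.filter fun x => φ {x, z} = c) (Y.filter fun y => φ {y, z} = b)
      (Finset.filter_subset _ _) (Finset.filter_subset _ _))).2
    have e1 : wsum (ind φ a) (X.filter fun x => φ {x, z} = c) (Y.filter fun y => φ {y, z} = b)
        = ∑ x ∈ X, ∑ y ∈ Y, ind φ a x y * ind φ b y z * ind φ c x z := by
      simp only [wsum, Finset.sum_filter]
      refine Finset.sum_congr rfl fun x _ => ?_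
      by_cases hx : φ {x, z} = c
      · simp only [hx, if_true]
        refine Finset.sum_congr rfl fun y _ => ?_
        simp [ind, hx]
      · simp [ind, hx]
    have e2 : ∑ x ∈ X, ∑ y ∈ Y, ind φ b y z * ind φ c x z
        = ((X.filter fun x => φ {x, z} = c).card : ℝ) * (Y.filter fun y => φ {y, z} = b).card := by
      simp only [← Finset.sum_mul, ← Finset.mul_sum, ind, Finset.sum_boole]
      ring
    rw [e1] at this
    rw [e2]
    linarith
  -- for fixed `x`, use regularity of colour `b` between `Y` and the neighbourhood of `x`
  have s2 : ∀ x, ∑ y ∈ Y, ∑ z ∈ Z, ind φ b y z * ind φ c x z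
      ≤ dB * Y.card * ∑ z ∈ Z, ind φ c x z + ε * (Y.card * Z.card) := by
    intro x
    have := (abs_le.mp (h2 Y (Z.filter fun z => φ {x, z} = c) subset_rfl
      (Finset.filter_subset _ _))).2
    have e1 : wsum (ind φ b) Y (Z.filter fun z => φ {x, z} = c)
        = ∑ y ∈ Y, ∑ z ∈ Z, ind φ b y z * ind φ c x z := by
      simp only [wsum, Finset.sum_filter]
      refine Finset.sum_congr rfl fun y _ => Finset.sum_congr rfl fun z _ => ?_
      simp only [ind]
      split_ifs <;> simp
    have e2 : ∑ z ∈ Z, ind φ c x z = ((Z.filter fun z => φ {x, z} = c).card : ℝ) := by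
      simp only [ind, Finset.sum_boole]
    rw [e1] at this
    rw [e2]
    linarith
  have s3 : ∑ x ∈ X, ∑ z ∈ Z, ind φ c x z = dC * (X.card * Z.card) := wsum_eq_pdens _ _ _
  have t2 : ∑ x ∈ X, ∑ y ∈ Y, ∑ z ∈ Z, ind φ b y z * ind φ c x z
      ≤ (dB * dC + ε) * (X.card * Y.card * Z.card) := by
    refine (Finset.sum_le_sum fun x _ => s2 x).trans ?_
    rw [Finset.sum_add_distrib, ← Finset.mul_sum, s3, Finset.sum_const, nsmul_eq_mul]
    apply le_of_eq; ring
  have swap : ∀ F : ℕ → ℕ → ℕ → ℝ, ∑ x ∈ X, ∑ y ∈ Y, ∑ z ∈ Z, F x y z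
      = ∑ z ∈ Z, ∑ x ∈ X, ∑ y ∈ Y, F x y z := by
    intro F
    rw [Finset.sum_comm (s := Z)]
    exact Finset.sum_congr rfl fun x _ => Finset.sum_comm
  rw [swap] at t2 ⊢
  refine (Finset.sum_le_sum fun z _ => s1 z).trans ?_
  rw [Finset.sum_add_distrib, ← Finset.mul_sum, Finset.sum_const, nsmul_eq_mul]
  have t3 := mul_le_mul_of_nonneg_left t2 hA0
  have hvol : (0 : ℝ) ≤ X.card * Y.card * Z.card := by positivity
  nlinarith [mul_nonneg (mul_nonneg hε hvol) (sub_nonneg.mpr hA1)]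

/-! ### The palette Lagrangian -/

lemma mem_palColours {P : Palette} {p : ℕ × ℕ × ℕ} (hp : p ∈ P) :
    p.1 ∈ palColours P ∧ p.2.1 ∈ palColours P ∧ p.2.2 ∈ palColours P := by
  unfold palColours
  simp only [Finset.mem_union, Finset.mem_image]
  exact ⟨.inl (.inl ⟨p, hp, rfl⟩), .inl (.inr ⟨p, hp, rfl⟩), .inr ⟨p, hp, rfl⟩⟩

lemma lamVVV_le_LambdaVVV {P : Palette} {x : ℕ → ℝ} (hx : IsWeighting P x) :
    lamVVV P x ≤ LambdaVVV P := by
  refine le_csSup ⟨P.card, ?_⟩ ⟨x, hx, rfl⟩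
  rintro _ ⟨y, ⟨h0, hs⟩, rfl⟩
  have h1 : ∀ a ∈ palColours P, y a ≤ 1 := fun a ha => hs ▸ Finset.single_le_sum h0 ha
  calc lamVVV P y ≤ ∑ p ∈ P, (1 : ℝ) := Finset.sum_le_sum fun p hp => by
        obtain ⟨ha, hb, hc⟩ := mem_palColours hp
        exact mul_le_one₀ (mul_le_one₀ (h1 _ ha) (h0 _ hb) (h1 _ hb)) (h0 _ hc) (h1 _ hc)
    _ = P.card := by simp

/-! ### The edges between three ordered sets -/

/-- Edges of `H` between three consecutive sets are triangles coloured from the palette, apart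
from at most `27` ordered triples for each deleted edge. -/
lemma eVVV_le {H : ThreeGraph} {P : Palette} {R : Finset (Finset ℕ)} (hR : R ⊆ H.edges)
    {ord : ℕ → ℕ} {φ : Finset ℕ → ℕ}
    (hφ : ∀ u v w : ℕ, ({u, v, w} : Finset ℕ) ∈ (H.deleteEdges R).edges →
      ord u < ord v → ord v < ord w → (φ {u, v}, φ {v, w}, φ {u, w}) ∈ P)
    {X Y Z : Finset ℕ} (hXY : ∀ x ∈ X, ∀ y ∈ Y, ord x < ord y)
    (hYZ : ∀ y ∈ Y, ∀ z ∈ Z, ord y < ord z) :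
    (eVVV H X Y Z : ℝ) ≤
      ∑ p ∈ P, ∑ x ∈ X, ∑ y ∈ Y, ∑ z ∈ Z, ind φ p.1 x y * ind φ p.2.1 y z * ind φ p.2.2 x z
        + 27 * R.card := by
  set S := (X ×ˢ Y ×ˢ Z).filter fun t => (φ {t.1, t.2.1}, φ {t.2.1, t.2.2}, φ {t.1, t.2.2}) ∈ P
    with hS
  have hsub : ((X ×ˢ Y ×ˢ Z).filter fun p => ({p.1, p.2.1, p.2.2} : Finset ℕ) ∈ H.edges)
      ⊆ S ∪ R.biUnion fun e => e ×ˢ e ×ˢ e := by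
    rintro ⟨x, y, z⟩ ht
    simp only [Finset.mem_filter, Finset.mem_product] at ht
    obtain ⟨⟨hx, hy, hz⟩, he⟩ := ht
    by_cases hr : ({x, y, z} : Finset ℕ) ∈ R
    · refine Finset.mem_union_right _ (Finset.mem_biUnion.mpr ⟨_, hr, ?_⟩)
      simp
    · refine Finset.mem_union_left _ ?_
      simp only [hS, Finset.mem_filter, Finset.mem_product]
      exact ⟨⟨hx, hy, hz⟩, hφ x y z (Finset.mem_sdiff.mpr ⟨he, hr⟩) (hXY x hx y hy)
        (hYZ y hy z hz)⟩
  have hRc : (R.biUnion fun e => e ×ˢ e ×ˢ e).card ≤ R.card * 27 := by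
    refine Finset.card_biUnion_le_card_mul _ _ _ fun e he => ?_
    rw [Finset.card_product, Finset.card_product, H.edge_card e (hR he)]
  have hcard : eVVV H X Y Z ≤ S.card + R.card * 27 :=
    (Finset.card_le_card hsub).trans ((Finset.card_union_le _ _).trans (by omega))
  have hScard : (S.card : ℝ) = ∑ p ∈ P, ∑ x ∈ X, ∑ y ∈ Y, ∑ z ∈ Z,
      ind φ p.1 x y * ind φ p.2.1 y z * ind φ p.2.2 x z := by
    rw [hS, Finset.card_filter]
    push_cast
    have : ∀ p : ℕ × ℕ × ℕ, ∑ x ∈ X, ∑ y ∈ Y, ∑ z ∈ Z,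
        ind φ p.1 x y * ind φ p.2.1 y z * ind φ p.2.2 x z
        = ∑ t ∈ X ×ˢ Y ×ˢ Z,
          if (φ {t.1, t.2.1}, φ {t.2.1, t.2.2}, φ {t.1, t.2.2}) = p then (1 : ℝ) else 0 := by
      rintro ⟨a, b, c⟩
      rw [Finset.sum_product]
      refine Finset.sum_congr rfl fun x _ => ?_
      rw [Finset.sum_product]
      refine Finset.sum_congr rfl fun y _ => Finset.sum_congr rfl fun z _ => ?_
      simp only [ind, Prod.mk.injEq]
      split_ifs <;> simp_all
    simp only [this]
    rw [Finset.sum_comm]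
    refine Finset.sum_congr rfl fun t _ => ?_
    rw [Finset.sum_ite_eq]
  calc (eVVV H X Y Z : ℝ) ≤ ((S.card + R.card * 27 : ℕ) : ℝ) := by exact_mod_cast hcard
    _ = _ := by push_cast; rw [hScard]; ring

/-- A set with an injective order function contains `m` consecutive blocks of `s` elements as
soon as it has at least `m * s` elements. -/
lemma exists_blocks {V : Finset ℕ} {ord : ℕ → ℕ} (hord : Set.InjOn ord ↑V) {m s : ℕ}
    (h : m * s ≤ V.card) : ∃ B : Fin m → Finset ℕ, (∀ i, B i ⊆ V) ∧ (∀ i, (B i).card = s) ∧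
      ∀ i j, i < j → ∀ x ∈ B i, ∀ y ∈ B j, ord x < ord y := by
  have hc : (V.image ord).card = V.card := Finset.card_image_of_injOn hord
  let e := (V.image ord).orderEmbOfFin hc
  have he : ∀ k, ∃ v ∈ V, ord v = e k := fun k =>
    Finset.mem_image.mp (Finset.orderEmbOfFin_mem _ hc k)
  choose g hgV hg using he
  have hlt : ∀ (i : Fin m) (r : Fin s), i.val * s + r.val < V.card := fun i r => by
    have : (i.val + 1) * s ≤ m * s := Nat.mul_le_mul_right _ i.isLt
    have := r.isLt
    nlinarith
  have hmono : ∀ k l, k < l → ord (g k) < ord (g l) := fun k l hkl => by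
    rw [hg, hg]; exact e.strictMono hkl
  have hinj : Function.Injective g := fun k l hkl => by
    have : e k = e l := by rw [← hg, ← hg, hkl]
    exact e.injective this
  refine ⟨fun i => Finset.univ.image fun r : Fin s => g ⟨i.val * s + r.val, hlt i r⟩,
    fun i => ?_, fun i => ?_, fun i j hij x hx y hy => ?_⟩
  · intro v hv
    obtain ⟨r, -, rfl⟩ := Finset.mem_image.mp hv
    exact hgV _
  · rw [Finset.card_image_of_injective, Finset.card_univ, Fintype.card_fin]
    intro r r' hrr
    have := Fin.mk.inj_iff.mp (hinj hrr)
    exact Fin.ext (by omega)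
  · obtain ⟨r, -, rfl⟩ := Finset.mem_image.mp hx
    obtain ⟨r', -, rfl⟩ := Finset.mem_image.mp hy
    refine hmono _ _ (Fin.mk_lt_mk.mpr ?_)
    have h1 : (i.val + 1) * s ≤ j.val * s := Nat.mul_le_mul_right _ hij
    have := r.isLt
    nlinarith

/-- If `u` and `v` round down to the same multiple of `1/q`, then `u` exceeds `v` by at most
`1/q`. -/
lemma le_add_of_floor_eq {u v : ℝ} {q : ℕ} (hq : 0 < q) (hv : 0 ≤ v)
    (h : ⌊u * q⌋₊ = ⌊v * q⌋₊) : u ≤ v + 1 / q := by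
  have hq' : (0 : ℝ) < q := by exact_mod_cast hq
  have h1 := Nat.lt_floor_add_one (u * q)
  have h2 := Nat.floor_le (mul_nonneg hv hq'.le)
  rw [h] at h1
  have : u * q ≤ (v + 1 / q) * q := by
    rw [add_mul, one_div, inv_mul_cancel₀ hq'.ne']; linarith
  exact le_of_mul_le_mul_right this hq'

/-- If all pairs between two nonempty sets have colours in `Φ`, the colour densities sum to `1`. -/
lemma sum_pdens_ind {φ : Finset ℕ → ℕ} {Φ X Y : Finset ℕ} (hX : X.Nonempty) (hY : Y.Nonempty)
    (h : ∀ x ∈ X, ∀ y ∈ Y, φ {x, y} ∈ Φ) : ∑ a ∈ Φ, pdens (ind φ a) X Y = 1 := by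
  have h1 : (X.card : ℝ) ≠ 0 := by exact_mod_cast hX.card_pos.ne'
  have h2 : (Y.card : ℝ) ≠ 0 := by exact_mod_cast hY.card_pos.ne'
  unfold pdens
  rw [← Finset.sum_div, div_eq_one_iff_eq (mul_ne_zero h1 h2)]
  unfold wsum
  rw [Finset.sum_comm]
  have : ∀ x ∈ X, ∑ a ∈ Φ, ∑ y ∈ Y, ind φ a x y = Y.card := by
    intro x hx
    rw [Finset.sum_comm]
    have : ∀ y ∈ Y, ∑ a ∈ Φ, ind φ a x y = 1 := fun y hy => by
      simp only [ind, Finset.sum_ite_eq, h x hx y hy, if_true]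
    rw [Finset.sum_congr rfl this]
    simp
  rw [Finset.sum_congr rfl this]
  simp

/-- For every ν > 0 and palette 𝒫 there are α, C > 0 and N ∈ ℕ such that any
3-graph on n ≥ N vertices which α-almost satisfies 𝒫 and is (d,η,▽)-dense has
d ≤ Λ^▽_𝒫 + Cη + ν. -/
theorem palette_upper_bound_almost_VVV (ν : ℝ) (hν : 0 < ν) (P : Palette) :
    ∃ α C : ℝ, 0 < α ∧ 0 < C ∧ ∃ N : ℕ, ∀ H : ThreeGraph, N ≤ H.verts.card →
      AlmostSatisfies H P α → ∀ d η : ℝ, 0 ≤ d → d ≤ 1 → 0 < η →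
      IsDenseVVV H d η → d ≤ LambdaVVV P + C * η + ν := by
  -- `4|P|/q ≤ ν/2`: both rounding and regularity cost `2/q` for each triple of the palette
  obtain ⟨q, hq⟩ := exists_nat_gt (8 * (P.card + 1) / ν)
  have hq0' : (0 : ℝ) < q := lt_trans (by positivity) hq
  have hq0 : 0 < q := by exact_mod_cast hq0'
  set K : Finset (palColours P → ℕ) := Fintype.piFinset fun _ => Finset.range (q + 1) with hK
  obtain ⟨m₀, hm₀⟩ := exists_mono_triangle K.card
  set m := m₀ + 1 with hm
  have hm0 : (0 : ℝ) < m := by positivity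
  obtain ⟨c, hc, hreg⟩ := exists_regular_tuple m (palColours P) (1 / q) (by positivity)
  -- each of the three sets will contain at least `c₁ n` vertices
  set c₁ : ℝ := c / (2 * m) with hc₁
  have hc₁0 : 0 < c₁ := by positivity
  refine ⟨c₁ ^ 3 * ν / 54, 1 / c₁ ^ 3, by positivity, by positivity, m, ?_⟩
  rintro H hN ⟨R, hRH, hRc, ord, φ, hord, hcol, hpal⟩ d η - - hη hdense
  set n := H.verts.card with hn
  have hn0 : 0 < n := by omega
  set s := n / m with hs
  have hs0 : 0 < s := Nat.div_pos hN (by omega)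
  obtain ⟨V, hVsub, hVcard, hVord⟩ := exists_blocks (V := H.verts) hord (m := m) (s := s)
    (Nat.mul_div_le n m)
  obtain ⟨U, hUV, hUne, hUc, hUreg⟩ := hreg (ind φ) (ind_nonneg φ) (ind_le_one φ) V
    (fun i => Finset.card_pos.mp (by rw [hVcard]; exact hs0))
  have hUord : ∀ i j, i < j → ∀ x ∈ U i, ∀ y ∈ U j, ord x < ord y := fun i j hij x hx y hy =>
    hVord i j hij x (hUV i hx) y (hUV j hy)
  have hUH : ∀ i, U i ⊆ H.verts := fun i => (hUV i).trans (hVsub i)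
  have hUbig : ∀ i, c₁ * n ≤ (U i).card := fun i => by
    refine le_trans ?_ (hUc i)
    rw [hVcard, hc₁, div_mul_eq_mul_div, mul_div_assoc]
    have : (n : ℝ) ≤ s * (2 * m) := by
      have h1 : n < (s + 1) * m := by
        rw [mul_comm]; exact Nat.lt_mul_div_succ n (by omega)
      have h2 : (s + 1) * m ≤ s * (2 * m) := by nlinarith
      exact_mod_cast (h1.trans_le h2).le
    gcongr
    rwa [div_le_iff₀ (by positivity)]
  have hd0 : ∀ a i j, 0 ≤ pdens (ind φ a) (U i) (U j) := fun a i j =>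
    pdens_nonneg (ind_nonneg φ a) _ _
  have hd1 : ∀ a i j, pdens (ind φ a) (U i) (U j) ≤ 1 := fun a i j =>
    pdens_le_one (ind_le_one φ a) _ _
  obtain ⟨i, j, k, hij, hjk, hE1, hE2⟩ := hm₀ K le_rfl m Finset.univ (by simp [hm])
    (fun i j => fun a : palColours P => ⌊pdens (ind φ a) (U i) (U j) * q⌋₊) (by
      intro i _ j _ _
      rw [hK, Fintype.mem_piFinset]
      intro a
      rw [Finset.mem_range, Nat.lt_succ_iff]
      refine Nat.floor_le_of_le ?_
      nlinarith [hd1 a i j])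
  have hik := hij.trans hjk
  set x : ℕ → ℝ := fun a => pdens (ind φ a) (U i) (U j) with hx
  have hxw : IsWeighting P x := by
    refine ⟨fun a _ => hd0 a i j, sum_pdens_ind (hUne i) (hUne j) fun u hu v hv => ?_⟩
    refine hcol u (hUH i hu) v (hUH j hv) ?_
    rintro rfl
    exact lt_irrefl _ (hUord i j hij u hu u hv)
  have hlam := lamVVV_le_LambdaVVV hxw
  set vol : ℝ := (U i).card * (U j).card * (U k).card with hvol
  have hvol0 : 0 ≤ vol := by positivity
  have hcount : ∀ p ∈ P, ∑ x ∈ U i, ∑ y ∈ U j, ∑ z ∈ U k,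
      ind φ p.1 x y * ind φ p.2.1 y z * ind φ p.2.2 x z
      ≤ (x p.1 * x p.2.1 * x p.2.2 + 4 / q) * vol := by
    intro p hp
    obtain ⟨ha, hb, hc'⟩ := mem_palColours hp
    refine (count_le (hUreg i j hij _ ha) (hUreg j k hjk _ hb) (by positivity)).trans ?_
    refine mul_le_mul_of_nonneg_right ?_ hvol0
    have f1 : pdens (ind φ p.2.1) (U j) (U k) ≤ x p.2.1 + 1 / q :=
      le_add_of_floor_eq hq0 (hd0 _ _ _) (congrFun hE2 ⟨_, hb⟩).symm
    have f2 : pdens (ind φ p.2.2) (U i) (U k) ≤ x p.2.2 + 1 / q :=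
      le_add_of_floor_eq hq0 (hd0 _ _ _) (congrFun hE1 ⟨_, hc'⟩).symm
    have hx0 : ∀ a, 0 ≤ x a := fun a => hd0 a i j
    have hx1 : ∀ a, x a ≤ 1 := fun a => hd1 a i j
    have g0 : (0 : ℝ) ≤ 1 / q := by positivity
    have g1 : x p.1 * pdens (ind φ p.2.1) (U j) (U k) ≤ x p.1 * x p.2.1 + 1 / q := by
      nlinarith [mul_le_mul_of_nonneg_left f1 (hx0 p.1), mul_nonneg g0 (sub_nonneg.mpr (hx1 p.1))]
    have g2 : x p.1 * pdens (ind φ p.2.1) (U j) (U k) * pdens (ind φ p.2.2) (U i) (U k)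
        ≤ x p.1 * x p.2.1 * x p.2.2 + 1 / q + 1 / q := by
      have hxx : x p.1 * x p.2.1 ≤ 1 := mul_le_one₀ (hx1 _) (hx0 _) (hx1 _)
      calc x p.1 * pdens (ind φ p.2.1) (U j) (U k) * pdens (ind φ p.2.2) (U i) (U k)
          ≤ (x p.1 * x p.2.1 + 1 / q) * pdens (ind φ p.2.2) (U i) (U k) :=
            mul_le_mul_of_nonneg_right g1 (hd0 _ _ _)
        _ ≤ x p.1 * x p.2.1 * pdens (ind φ p.2.2) (U i) (U k) + 1 / q := by
            nlinarith [mul_nonneg g0 (sub_nonneg.mpr (hd1 p.2.2 i k))]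
        _ ≤ _ := by
            nlinarith [mul_le_mul_of_nonneg_left f2 (mul_nonneg (hx0 p.1) (hx0 p.2.1)),
              mul_nonneg g0 (sub_nonneg.mpr hxx)]
    have : (4 : ℝ) / q = 1 / q + 1 / q + 2 * (1 / q) := by ring
    rw [this]
    linarith
  have hupper := eVVV_le hRH hpal (hUord i j hij) (hUord j k hjk)
  have hlower := hdense (U i) (U j) (U k) (hUH i) (hUH j) (hUH k)
  have hsumP := Finset.sum_le_sum hcount
  rw [← Finset.sum_mul, Finset.sum_add_distrib, Finset.sum_const, nsmul_eq_mul] at hsumP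
  change _ ≤ (lamVVV P x + _) * vol at hsumP
  have herr : (P.card : ℝ) * (4 / q) ≤ ν / 2 := by
    rw [div_lt_iff₀ hν] at hq
    rw [← mul_div_assoc, div_le_iff₀ hq0']
    nlinarith
  have hvolbig : (c₁ * n) ^ 3 ≤ vol := by
    have h0 : 0 ≤ c₁ * n := by positivity
    calc (c₁ * n) ^ 3 = (c₁ * n) * (c₁ * n) * (c₁ * n) := by ring
      _ ≤ vol := by
        rw [hvol]
        gcongr
        exacts [hUbig i, hUbig j, hUbig k]
  have hnr : (0 : ℝ) < n := by exact_mod_cast hn0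
  have hvolpos : 0 < vol := lt_of_lt_of_le (by positivity) hvolbig
  have hn3 : (n : ℝ) ^ 3 ≤ 1 / c₁ ^ 3 * vol := by
    rw [one_div, inv_mul_eq_div, le_div_iff₀ (by positivity)]
    calc (n : ℝ) ^ 3 * c₁ ^ 3 = (c₁ * n) ^ 3 := by ring
      _ ≤ vol := hvolbig
  have hfin : d * vol ≤ (LambdaVVV P + 1 / c₁ ^ 3 * η + ν) * vol := by
    have a1 : (lamVVV P x + P.card * (4 / q)) * vol ≤ (LambdaVVV P + ν / 2) * vol := by
      gcongr
    have a2 : η * (n : ℝ) ^ 3 ≤ 1 / c₁ ^ 3 * η * vol := by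
      calc η * (n : ℝ) ^ 3 ≤ η * (1 / c₁ ^ 3 * vol) := by gcongr
        _ = _ := by ring
    have a3 : 27 * (R.card : ℝ) ≤ ν / 2 * vol := by
      calc 27 * (R.card : ℝ) ≤ 27 * (c₁ ^ 3 * ν / 54 * (n : ℝ) ^ 3) := by gcongr
        _ = ν / 2 * (c₁ * n) ^ 3 := by ring
        _ ≤ _ := by gcongr
    have a4 : d * vol - η * (n : ℝ) ^ 3 ≤ eVVV H (U i) (U j) (U k) := by
      rw [hvol]; linarith
    linarith
  exact le_of_mul_le_mul_right hfin hvolpos
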